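/- arXiv:2510.21058 — 2 statements merged into one kernel-verified Lean document; each statement's English description precedes it below -/
import Mathlib

section
/- There exist absolute constants 0 < c ≤ C such that for every integer p ≥ 2 and every integer k with 0 ≤ k ≤ log*_e p − 1, c · p / log_e^{(k)} p ≤ bell_k(p)^{1/p} ≤ C · p / log_e^{(k)} p. (Note that k ≤ log*_e p − 1 guarantees log_e^{(k)} p > 1.) -/
/-- `Q` is a refinement of `P`: every part of `Q` is contained in some part of `P`. -/
def FPRefines {p : ℕ} (Q P : Finpartition (Finset.univ : Finset (Fin p))) : Prop :=
  ∀ a ∈ Q.parts, ∃ b ∈ P.parts, a ⊆ b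

/-- `f = (T_1, …, T_k)` is a `k`-level (hierarchical) partition of `[p]`: each `T_{i+1}`
is a refinement of `T_i`. -/
def IsKLevel {p : ℕ} (k : ℕ)
    (f : Fin k → Finpartition (Finset.univ : Finset (Fin p))) : Prop :=
  ∀ (i : ℕ) (h : i + 1 < k), FPRefines (f ⟨i + 1, h⟩) (f ⟨i, Nat.lt_of_succ_lt h⟩)

/-- The order-`k` Bell number `bell_k(p)`: the number of `k`-level hierarchical partitions
of `[p]` (so `bell_0(p) = 1`). -/
noncomputable def bellk (k p : ℕ) : ℕ :=
  Nat.card {f : Fin k → Finpartition (Finset.univ : Finset (Fin p)) // IsKLevel k f}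

/-- The `k`-fold iterated natural logarithm, `log^{(0)} x = x`. -/
noncomputable def iterLog (k : ℕ) (x : ℝ) : ℝ := Real.log^[k] x

/-- `log* x`: the smallest `k ≥ 0` such that `log^{(k)} x ≤ 1`. -/
noncomputable def logStar (x : ℝ) : ℕ := sInf {k : ℕ | iterLog k x ≤ 1}


abbrev BChains (k : ℕ) (P : Type*) [Preorder P] := {f : Fin k → P // Antitone f}

lemma bchains_card_congr {P Q : Type*} [Preorder P] [Preorder Q] (k : ℕ) (e : P ≃o Q) :
    Nat.card (BChains k P) = Nat.card (BChains k Q) := by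
  refine Nat.card_congr ⟨fun f => ⟨fun i => e (f.1 i), fun i j h => e.monotone (f.2 h)⟩,
    fun f => ⟨fun i => e.symm (f.1 i), fun i j h => e.symm.monotone (f.2 h)⟩, ?_, ?_⟩
  · intro f; ext i; simp
  · intro f; ext i; simp

noncomputable def fpSetoidIso (p : ℕ) :
    Finpartition (Finset.univ : Finset (Fin p)) ≃o Setoid (Fin p) := by
  classical
  have hle : ∀ P Q : Finpartition (Finset.univ : Finset (Fin p)),
      Setoid.ker P.part ≤ Setoid.ker Q.part ↔ P ≤ Q := by
    intro P Q
    constructor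
    · intro h b hb
      obtain ⟨x, hx⟩ := P.nonempty_of_mem_parts hb
      refine ⟨Q.part x, Q.part_mem.2 (Finset.mem_univ _), fun y hy => ?_⟩
      have h1 : P.part x = P.part y := by
        rw [P.part_eq_of_mem hb hx, P.part_eq_of_mem hb hy]
      have h2 : Q.part x = Q.part y := h h1
      rw [h2]
      exact Q.mem_part (Finset.mem_univ _)
    · intro h x y hxy
      have hxy : P.part x = P.part y := hxy
      obtain ⟨c, hc, hbc⟩ := h (P.part_mem.2 (Finset.mem_univ x))
      have hx : x ∈ c := hbc (P.mem_part (Finset.mem_univ _))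
      have hy : y ∈ c := hbc (by rw [hxy]; exact P.mem_part (Finset.mem_univ _))
      change Q.part x = Q.part y
      rw [Q.part_eq_of_mem hc hx, Q.part_eq_of_mem hc hy]
  refine RelIso.ofSurjective (OrderEmbedding.ofMapLEIff (fun P => Setoid.ker P.part) hle) ?_
  intro s
  refine ⟨Finpartition.ofSetoid s, ?_⟩
  ext x y
  change (Finpartition.ofSetoid s).part x = (Finpartition.ofSetoid s).part y ↔ _
  rw [← Finpartition.mem_part_iff_part_eq_part _ (Finset.mem_univ _) (Finset.mem_univ _),
    Finpartition.mem_part_ofSetoid_iff_rel]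
  exact ⟨s.symm', s.symm'⟩

lemma bellk_eq (k p : ℕ) : bellk k p = Nat.card (BChains k (Setoid (Fin p))) := by
  rw [← bchains_card_congr k (fpSetoidIso p)]
  unfold bellk
  refine Nat.card_congr (Equiv.subtypeEquivRight fun f => ?_)
  cases k with
  | zero => exact ⟨fun _ i => i.elim0, fun _ i h => absurd h (by omega)⟩
  | succ n =>
    rw [Fin.antitone_iff_succ_le]
    constructor
    · intro h i a ha
      exact h i.1 (by omega) a ha
    · intro h i hi a ha
      exact h ⟨i, by omega⟩ ha

def setoidCongr {α β : Type*} (e : α ≃ β) : Setoid α ≃o Setoid β where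
  toFun s := s.comap e.symm
  invFun s := s.comap e
  left_inv s := by ext x y; simp [Setoid.comap_rel]
  right_inv s := by ext x y; simp [Setoid.comap_rel]
  map_rel_iff' := by
    intro s t
    constructor
    · intro h x y hxy
      have h1 : s (e.symm (e x)) (e.symm (e y)) := by
        rw [e.symm_apply_apply, e.symm_apply_apply]; exact hxy
      have h2 : t (e.symm (e x)) (e.symm (e y)) := @h (e x) (e y) h1
      rw [e.symm_apply_apply, e.symm_apply_apply] at h2
      exact h2
    · intro h x y hxy
      exact h hxy

def bchainsSucc (k : ℕ) (P : Type*) [Preorder P] :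
    BChains (k+1) P ≃ Σ r : P, BChains k {s : P // r ≤ s} where
  toFun f := ⟨f.1 (Fin.last k), ⟨fun i => ⟨f.1 i.castSucc, f.2 (Fin.le_last _)⟩,
    fun i j h => f.2 (Fin.castSucc_le_castSucc_iff.2 h)⟩⟩
  invFun g := ⟨Fin.snoc (α := fun _ => P) (fun i => (g.2.1 i).1) g.1, by
    intro i j
    refine Fin.lastCases ?_ (fun j => ?_) j
    · refine Fin.lastCases ?_ (fun i => ?_) i
      · intro _; exact le_rfl
      · intro _; simpa using (g.2.1 i).2
    · refine Fin.lastCases ?_ (fun i => ?_) i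
      · intro h; exact absurd h (by simp [Fin.le_def])
      · intro h
        simpa using g.2.2 (Fin.castSucc_le_castSucc_iff.1 h)⟩
  left_inv f := by
    ext i
    refine Fin.lastCases ?_ (fun i => ?_) i <;> simp
  right_inv g := by
    obtain ⟨r, g, hg⟩ := g
    have h1 : (Fin.snoc (α := fun _ => P) (fun i => (g i).1) r : Fin (k+1) → P) (Fin.last k) = r := by simp
    have h2 : ∀ i : Fin k, (Fin.snoc (α := fun _ => P) (fun i => (g i).1) r : Fin (k+1) → P) i.castSucc = (g i).1 := by simp
    have key : ∀ (F : Fin (k+1) → P) (hF : Antitone F), F (Fin.last k) = r →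
        (∀ i : Fin k, F i.castSucc = (g i).1) →
        (⟨F (Fin.last k), ⟨fun i => ⟨F i.castSucc, hF (Fin.le_last _)⟩,
          fun i j h => hF (Fin.castSucc_le_castSucc_iff.2 h)⟩⟩ :
          Σ r : P, BChains k {s : P // r ≤ s}) = ⟨r, ⟨g, hg⟩⟩ := by
      rintro F hF rfl h2
      exact Sigma.ext rfl (heq_of_eq (Subtype.ext (funext fun i => Subtype.ext (h2 i))))
    exact key _ _ h1 h2

lemma bellk_succ (k p : ℕ) : bellk (k+1) p =
    ∑ m ∈ Finset.range (p+1),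
      Nat.card {r : Setoid (Fin p) // Nat.card (Quotient r) = m} * bellk k m := by
  classical
  have : Fintype (Setoid (Fin p)) := Fintype.ofEquiv _ (fpSetoidIso p).toEquiv
  have hq : ∀ r : Setoid (Fin p), Nat.card (BChains k {s // r ≤ s}) =
      bellk k (Nat.card (Quotient r)) := by
    intro r
    rw [bellk_eq]
    exact bchains_card_congr k
      ((Setoid.correspondence r).trans (setoidCongr (Finite.equivFin (Quotient r))))
  rw [bellk_eq, Nat.card_congr (bchainsSucc k _), Nat.card_sigma]
  simp_rw [hq]
  rw [← Finset.sum_fiberwise_of_maps_to (t := Finset.range (p+1))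
    (g := fun r : Setoid (Fin p) => Nat.card (Quotient r))]
  · refine Finset.sum_congr rfl fun m _ => ?_
    rw [Finset.sum_congr rfl (g := fun _ => bellk k m)]
    · simp [Nat.card_eq_fintype_card, Fintype.card_subtype]
    · intro r hr
      rw [(Finset.mem_filter.1 hr).2]
  · intro r _
    have := Nat.card_le_card_of_surjective (Quotient.mk r) Quotient.mk_surjective
    simp at this ⊢
    omega

lemma stirl_upper (p m : ℕ) :
    m.factorial * Nat.card {r : Setoid (Fin p) // Nat.card (Quotient r) = m} ≤ m ^ p := by
  classical
  let e : ∀ r : {r : Setoid (Fin p) // Nat.card (Quotient r) = m}, Quotient r.1 ≃ Fin m :=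
    fun r => Finite.equivFinOfCardEq r.2
  let F : Equiv.Perm (Fin m) × {r : Setoid (Fin p) // Nat.card (Quotient r) = m} → (Fin p → Fin m) :=
    fun q x => q.1 (e q.2 (Quotient.mk q.2.1 x))
  have hF : Function.Injective F := by
    rintro ⟨s, r⟩ ⟨s', r'⟩ h
    have hk : ∀ (s : Equiv.Perm (Fin m)) r, Setoid.ker (F (s, r)) = r.1 := by
      intro s r
      ext x y
      simp [F, Setoid.ker_def, Quotient.eq]
    have hr : r = r' := Subtype.ext (by rw [← hk s r, ← hk s' r', h])
    subst hr
    congr 1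
    ext1 y
    obtain ⟨x, hx⟩ := Quotient.mk_surjective ((e r).symm y)
    have := congrFun h x
    simp only [F] at this
    rw [hx] at this
    simpa using this
  have := Nat.card_le_card_of_injective F hF
  simpa [Nat.card_prod, Nat.card_eq_fintype_card (α := Equiv.Perm (Fin m)), Fintype.card_perm] using this

lemma stirl_lower (n m : ℕ) :
    m ^ n ≤ Nat.card {r : Setoid (Fin (m + n)) // Nat.card (Quotient r) = m} := by
  classical
  have : Finite (Setoid (Fin (m+n))) := Finite.of_equiv _ (fpSetoidIso (m+n)).toEquiv
  let G : (Fin n → Fin m) → (Fin (m + n) → Fin m) := fun h => Fin.append id h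
  have hs : ∀ h, Function.Surjective (G h) := fun h y => ⟨Fin.castAdd n y, by simp [G]⟩
  let F : (Fin n → Fin m) → {r : Setoid (Fin (m + n)) // Nat.card (Quotient r) = m} :=
    fun h => ⟨Setoid.ker (G h), by
      rw [Nat.card_congr (Setoid.quotientKerEquivOfSurjective _ (hs h))]; simp⟩
  have hF : Function.Injective F := by
    intro h h' hh
    have hh : Setoid.ker (G h) = Setoid.ker (G h') := congrArg Subtype.val hh
    ext1 i
    have h1 : Setoid.ker (G h) (Fin.natAdd m i) (Fin.castAdd n (h i)) := by
      simp [Setoid.ker_def, G]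
    rw [hh] at h1
    simp [Setoid.ker_def, G] at h1
    exact h1.symm
  have := Nat.card_le_card_of_injective F hF
  simpa using this

lemma bellk_zero (p : ℕ) : bellk 0 p = 1 := by
  rw [bellk_eq, Nat.card_eq_one_iff_unique]
  exact ⟨⟨fun a b => by ext i; exact i.elim0⟩, ⟨⟨fun i => i.elim0, fun i => i.elim0⟩⟩⟩

lemma bellk_lower_step (k m n : ℕ) : m ^ n * bellk k m ≤ bellk (k+1) (m + n) := by
  rw [bellk_succ]
  refine le_trans (Nat.mul_le_mul_right _ (stirl_lower n m)) ?_
  exact Finset.single_le_sum (f := fun q => Nat.card {r : Setoid (Fin (m+n)) // Nat.card (Quotient r) = q} * bellk k q) (fun _ _ => Nat.zero_le _) (Finset.mem_range.2 (by omega))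

lemma bellk_pos (k p : ℕ) : 1 ≤ bellk k p := by
  induction k generalizing p with
  | zero => rw [bellk_zero]
  | succ k ih =>
    have := bellk_lower_step k p 0
    simp at this
    exact (ih p).trans this

lemma bellk_egf (k : ℕ) : ∀ (x : ℝ), 0 ≤ x → ∀ N : ℕ,
    ∑ p ∈ Finset.range N, (bellk k p : ℝ) * (x ^ p / p.factorial) ≤
      Real.exp (Real.exp^[k] x) := by
  induction k with
  | zero =>
    intro x hx N
    simpa [bellk_zero] using Real.sum_le_exp_of_nonneg hx N
  | succ k ih =>
    intro x hx N
    have hstep : ∀ p ∈ Finset.range N, (bellk (k+1) p : ℝ) * (x ^ p / p.factorial) ≤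
        ∑ m ∈ Finset.range N, (bellk k m : ℝ) / m.factorial * ((m * x) ^ p / p.factorial) := by
      intro p hp
      rw [bellk_succ]
      push_cast
      rw [Finset.sum_mul]
      refine le_trans (Finset.sum_le_sum (g := fun m : ℕ =>
        (bellk k m : ℝ) / m.factorial * ((m * x) ^ p / p.factorial)) ?_) ?_
      · intro m _
        have h1 : (m.factorial : ℝ) *
            (Nat.card {r : Setoid (Fin p) // Nat.card (Quotient r) = m} : ℝ) ≤ (m : ℝ) ^ p := by
          exact_mod_cast stirl_upper p m
        have h2 : (0 : ℝ) < m.factorial := by exact_mod_cast m.factorial_pos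
        have h3 : (Nat.card {r : Setoid (Fin p) // Nat.card (Quotient r) = m} : ℝ) ≤
            (m : ℝ) ^ p / m.factorial := by
          rw [le_div_iff₀ h2]; linarith
        calc _ ≤ ((m : ℝ) ^ p / m.factorial) * (bellk k m : ℝ) * (x ^ p / p.factorial) := by
              gcongr
          _ = _ := by rw [mul_pow]; ring
      · refine Finset.sum_le_sum_of_subset_of_nonneg ?_ ?_
        · intro m hm
          simp only [Finset.mem_range] at *
          omega
        · intros; positivity
    refine (Finset.sum_le_sum hstep).trans ?_
    rw [Finset.sum_comm, Function.iterate_succ_apply]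
    refine le_trans ?_ (ih (Real.exp x) (Real.exp_pos x).le N)
    refine Finset.sum_le_sum fun m _ => ?_
    rw [← Finset.mul_sum]
    have h := Real.sum_le_exp_of_nonneg (x := m * x) (by positivity) N
    calc _ ≤ (bellk k m : ℝ) / m.factorial * Real.exp (m * x) := by gcongr
      _ = _ := by rw [Real.exp_nat_mul]; ring

lemma bellk_upper (k p : ℕ) (x : ℝ) (hx : 0 < x) (h : Real.exp^[k] x = p) :
    (bellk k p : ℝ) ≤ (Real.exp 1 * p / x) ^ p := by
  have h1 := bellk_egf k x hx.le (p + 1)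
  have h2 := Finset.single_le_sum (f := fun p : ℕ => (bellk k p : ℝ) * (x ^ p / p.factorial))
    (fun i _ => by positivity) (Finset.self_mem_range_succ p)
  have h3 := h2.trans h1
  rw [h] at h3
  have h4 : (p.factorial : ℝ) ≤ (p : ℝ) ^ p := by exact_mod_cast p.factorial_le_pow
  have h5 : (0 : ℝ) < p.factorial := by exact_mod_cast p.factorial_pos
  have h6 : (bellk k p : ℝ) * x ^ p ≤ Real.exp p * p.factorial := by
    rw [← mul_div_assoc, div_le_iff₀ h5] at h3
    exact h3
  rw [div_pow, mul_pow, le_div_iff₀ (by positivity), ← Real.exp_nat_mul, mul_one]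
  exact h6.trans (by gcongr)

lemma bellk_lower (k : ℕ) : ∀ (t : ℝ), 1 ≤ t → ∀ p : ℕ, (p : ℝ) ≤ Real.exp^[k] t →
    (Real.exp (-(2 + 4 / t)) * p / t) ^ p ≤ (bellk k p : ℝ) := by
  have triv : ∀ k (t : ℝ), 1 ≤ t → ∀ p : ℕ, (p : ℝ) ≤ t →
      (Real.exp (-(2 + 4 / t)) * p / t) ^ p ≤ (bellk k p : ℝ) := by
    intro k t ht p hp
    have h1 : (1 : ℝ) ≤ bellk k p := by exact_mod_cast bellk_pos k p
    refine le_trans (pow_le_one₀ (by positivity) ?_) h1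
    rw [div_le_one (by positivity)]
    have : Real.exp (-(2 + 4 / t)) ≤ 1 := by
      rw [Real.exp_le_one_iff]
      have : 0 < 4 / t := by positivity
      linarith
    calc _ ≤ 1 * (p : ℝ) := by gcongr
      _ ≤ t := by linarith
  induction k with
  | zero =>
    intro t ht p hp
    exact triv 0 t ht p hp
  | succ k ih =>
    intro t ht p hp
    by_cases hpt : (p : ℝ) ≤ t
    · exact triv _ t ht p hpt
    push Not at hpt
    have ht0 : 0 < t := by linarith
    have hq1 : 1 ≤ (p : ℝ) / t := by rw [le_div_iff₀ ht0]; linarith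
    obtain ⟨m, hm⟩ : ∃ m, m = ⌊(p : ℝ) / t⌋₊ := ⟨_, rfl⟩
    have hm1 : 1 ≤ m := by rw [hm]; exact Nat.le_floor (by simpa using hq1)
    have hm1' : (1 : ℝ) ≤ m := by exact_mod_cast hm1
    have hmle : (m : ℝ) ≤ p / t := by rw [hm]; exact Nat.floor_le (by positivity)
    have hmlt : (p : ℝ) / t < m + 1 := by rw [hm]; exact Nat.lt_floor_add_one _
    have hmp' : (m : ℝ) ≤ p := hmle.trans (div_le_self (by positivity) ht)
    have hmp : m ≤ p := by exact_mod_cast hmp'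
    obtain ⟨n, rfl⟩ := Nat.exists_eq_add_of_le hmp
    have het : 2 ≤ Real.exp t := by
      have := Real.add_one_le_exp t; linarith
    have hI := ih (Real.exp t) (by linarith) m (by
      rw [Function.iterate_succ_apply] at hp
      exact hmp'.trans hp)
    have hL : (m : ℝ) ^ n * bellk k m ≤ bellk (k+1) (m+n) := by
      exact_mod_cast bellk_lower_step k m n
    refine le_trans ?_ hL
    refine le_trans ?_ (mul_le_mul_of_nonneg_left hI (by positivity))
    set P : ℝ := ((m + n : ℕ) : ℝ) with hP
    have e1 : (m : ℝ) ^ n * (Real.exp (-(2 + 4 / Real.exp t)) * m / Real.exp t) ^ m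
        = (m : ℝ) ^ (m + n) * Real.exp (-(m * (2 + 4 / Real.exp t + t))) := by
      have : Real.exp (-(2 + 4 / Real.exp t)) * m / Real.exp t =
          m * Real.exp (-(2 + 4 / Real.exp t + t)) := by
        rw [neg_add _ t, Real.exp_add, Real.exp_neg t]; ring
      rw [this, mul_pow, ← Real.exp_nat_mul, pow_add]
      ring_nf
    have e2 : (Real.exp (-(2 + 4 / t)) * P / t) ^ (m + n)
        = (Real.exp (-1) * (P / t)) ^ (m + n) * Real.exp (-(P * (1 + 4 / t))) := by
      have : Real.exp (-(2 + 4 / t)) * P / t =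
          (Real.exp (-1) * (P / t)) * Real.exp (-(1 + 4 / t)) := by
        rw [show -(2 + 4 / t) = -1 + -(1 + 4 / t) by ring, Real.exp_add]; ring
      rw [this, mul_pow _ (Real.exp (-(1 + 4 / t))), ← Real.exp_nat_mul, ← hP]
      ring_nf
    rw [e1, e2]
    have he : Real.exp (-1) ≤ 1 / 2 := by
      rw [Real.exp_neg, inv_eq_one_div]
      have := Real.add_one_le_exp (1 : ℝ)
      exact one_div_le_one_div_of_le (by norm_num) (by linarith)
    refine mul_le_mul (pow_le_pow_left₀ (by positivity) ?_ _) ?_ (by positivity) (by positivity)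
    · calc _ ≤ 1 / 2 * (P / t) := by gcongr
        _ ≤ m := by linarith
    · rw [Real.exp_le_exp, neg_le_neg_iff]
      have h4 : 4 / Real.exp t ≤ 2 := by rw [div_le_iff₀ (by positivity)]; linarith
      calc (m : ℝ) * (2 + 4 / Real.exp t + t) ≤ (P / t) * (2 + 2 + t) := by gcongr
        _ = _ := by field_simp; ring

lemma iterLog_gt (p k : ℕ) (hp : 2 ≤ p) (hk : k ≤ logStar p - 1) :
    ∀ j ≤ k, 1 < iterLog j p := by
  intro j hj
  rcases Nat.eq_zero_or_pos j with rfl | h0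
  · have : (2 : ℝ) ≤ p := by exact_mod_cast hp
    simp only [iterLog, Function.iterate_zero, id]
    linarith
  · have : j < logStar p := by omega
    have := Nat.notMem_of_lt_sInf this
    simpa using this

lemma exp_iterLog (k : ℕ) (x : ℝ) (h : ∀ j ≤ k, 1 < iterLog j x) :
    Real.exp^[k] (iterLog k x) = x := by
  induction k with
  | zero => rfl
  | succ k ih =>
    have h1 : iterLog (k+1) x = Real.log (iterLog k x) := Function.iterate_succ_apply' _ _ _
    rw [Function.iterate_succ_apply, h1, Real.exp_log (by linarith [h k (by omega)])]
    exact ih fun j hj => h j (by omega)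

/-- There are absolute constants `0 < c ≤ C` such that for every
integer `p ≥ 2` and every `0 ≤ k ≤ log* p − 1`,
`c · p / log^{(k)} p ≤ bell_k(p)^{1/p} ≤ C · p / log^{(k)} p`. -/
theorem bellk_asymptotics_small_k :
    ∃ c C : ℝ, 0 < c ∧ c ≤ C ∧
      ∀ p : ℕ, 2 ≤ p → ∀ k : ℕ, k ≤ logStar p - 1 →
        c * p / iterLog k p ≤ (bellk k p : ℝ) ^ (1 / (p : ℝ)) ∧
        (bellk k p : ℝ) ^ (1 / (p : ℝ)) ≤ C * p / iterLog k p := by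
  refine ⟨Real.exp (-6), Real.exp 1, Real.exp_pos _, Real.exp_le_exp.2 (by norm_num), ?_⟩
  intro p hp k hk
  have hgt := iterLog_gt p k hp hk
  have he := exp_iterLog k p hgt
  have hx := hgt k le_rfl
  set x := iterLog k p with hxdef
  have hx0 : 0 < x := by linarith
  have hp0 : p ≠ 0 := by omega
  have hU := bellk_upper k p x hx0 he
  have hL := bellk_lower k x hx.le p he.ge
  have key : ∀ y : ℝ, 0 ≤ y → (y ^ p) ^ (1 / (p : ℝ)) = y := by
    intro y hy
    rw [one_div]
    exact Real.pow_rpow_inv_natCast hy hp0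
  constructor
  · have h1 : Real.exp (-6) ≤ Real.exp (-(2 + 4 / x)) := by
      rw [Real.exp_le_exp]
      have : 4 / x ≤ 4 := div_le_self (by norm_num) hx.le
      linarith
    calc Real.exp (-6) * p / x ≤ Real.exp (-(2 + 4 / x)) * p / x := by gcongr
      _ = ((Real.exp (-(2 + 4 / x)) * p / x) ^ p) ^ (1 / (p : ℝ)) := (key _ (by positivity)).symm
      _ ≤ _ := Real.rpow_le_rpow (by positivity) hL (by positivity)
  · calc (bellk k p : ℝ) ^ (1 / (p : ℝ)) ≤ ((Real.exp 1 * p / x) ^ p) ^ (1 / (p : ℝ)) :=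
          Real.rpow_le_rpow (by positivity) hU (by positivity)
      _ = _ := key _ (by positivity)
end

section
/- There exist absolute constants 0 < c ≤ C such that for every integer p ≥ 2 and every integer k > k_0, where k_0 = log*_e p − 1, c · p · (k − k_0)^{1 − 1/p} ≤ bell_k(p)^{1/p} ≤ C · p · (k − k_0)^{1 − 1/p}. (Equivalently, bell_k(p)^{1/p} = Θ(p · min(k^{1−1/p}, k − k_0)) in this range.) -/
/-! ### Part 1: combinatorics -/

namespace BellAux

/-- Antitone chains of length `k` in `β`. -/
def Ch (k : ℕ) (β : Type*) [Preorder β] : Type _ := {f : Fin k → β // Antitone f}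

/-- Transport of chains along an order isomorphism. -/
def chCongr (k : ℕ) {β γ : Type*} [Preorder β] [Preorder γ] (e : β ≃o γ) : Ch k β ≃ Ch k γ where
  toFun f := ⟨fun i => e (f.1 i), fun _ _ h => e.monotone (f.2 h)⟩
  invFun f := ⟨fun i => e.symm (f.1 i), fun _ _ h => e.symm.monotone (f.2 h)⟩
  left_inv f := by apply Subtype.ext; funext i; simp
  right_inv f := by apply Subtype.ext; funext i; simp

/-- Setoids along an equivalence. -/
def setoidCongr {α β : Type*} (e : α ≃ β) : Setoid α ≃o Setoid β where
  toFun s := s.comap e.symm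
  invFun s := s.comap e
  left_inv s := by ext x y; simp [Setoid.comap_rel]
  right_inv s := by ext x y; simp [Setoid.comap_rel]
  map_rel_iff' := by
    intro s t
    constructor
    · intro h x y hxy
      have h1 : s (e.symm (e x)) (e.symm (e y)) := by
        rw [e.symm_apply_apply, e.symm_apply_apply]; exact hxy
      have h2 : t (e.symm (e x)) (e.symm (e y)) := h h1
      rw [e.symm_apply_apply, e.symm_apply_apply] at h2
      exact h2
    · intro h x y hxy
      exact h hxy

/-- Number of chains of setoids. -/
noncomputable def hb (k p : ℕ) : ℕ := Nat.card (Ch k (Setoid (Fin p)))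

open Classical in
/-- Finpartitions of the universe are setoids. -/
noncomputable def fpIso (p : ℕ) :
    Finpartition (Finset.univ : Finset (Fin p)) ≃o Setoid (Fin p) where
  toFun P := Setoid.ker P.part
  invFun s := Finpartition.ofSetoid s
  left_inv P := by
    have key : ∀ R : Finpartition (Finset.univ : Finset (Fin p)),
        R.parts = Finset.univ.image R.part := by
      intro R
      ext t
      simp only [Finset.mem_image, Finset.mem_univ, true_and]
      constructor
      · intro ht
        obtain ⟨a, ha⟩ := R.nonempty_of_mem_parts ht
        exact ⟨a, R.part_eq_of_mem ht ha⟩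
      · rintro ⟨a, rfl⟩
        exact R.part_mem.2 (Finset.mem_univ _)
    apply Finpartition.ext
    rw [key, key P]
    congr 1
    funext a
    ext b
    refine Finpartition.mem_part_ofSetoid_iff_rel.trans ?_
    rw [Setoid.ker_def, P.mem_part_iff_part_eq_part (Finset.mem_univ _) (Finset.mem_univ _)]
    exact eq_comm
  right_inv s := by
    ext a b
    rw [Setoid.ker_def, eq_comm, ← Finpartition.mem_part_iff_part_eq_part _ (Finset.mem_univ _)
      (Finset.mem_univ _)]
    exact Finpartition.mem_part_ofSetoid_iff_rel
  map_rel_iff' := by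
    intro P Q
    change Setoid.ker P.part ≤ Setoid.ker Q.part ↔ _
    constructor
    · intro h t ht
      obtain ⟨a, ha⟩ := P.nonempty_of_mem_parts ht
      refine ⟨Q.part a, Q.part_mem.2 (Finset.mem_univ _), ?_⟩
      intro b hb
      have h1 : Setoid.ker P.part b a := by
        rw [Setoid.ker_def, P.part_eq_of_mem ht ha, P.part_eq_of_mem ht hb]
      have h2 := h h1
      rw [Setoid.ker_def] at h2
      rw [Q.mem_part_iff_part_eq_part (Finset.mem_univ _) (Finset.mem_univ _)]
      exact h2
    · intro h a b hab
      rw [Setoid.ker_def] at hab ⊢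
      obtain ⟨c, hc, hac⟩ := h (P.part_mem.2 (Finset.mem_univ a))
      have h1 : a ∈ P.part a := P.mem_part_self.2 (Finset.mem_univ a)
      have h2 : b ∈ P.part a := by rw [hab]; exact P.mem_part_self.2 (Finset.mem_univ b)
      rw [Q.part_eq_of_mem hc (hac h1), Q.part_eq_of_mem hc (hac h2)]

theorem isKLevel_iff {k p : ℕ} (f : Fin k → Finpartition (Finset.univ : Finset (Fin p))) :
    IsKLevel k f ↔ Antitone f := by
  cases k with
  | zero =>
    constructor
    · intro _ i; exact i.elim0
    · intro _ i h; omega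
  | succ n =>
    rw [Fin.antitone_iff_succ_le]
    constructor
    · intro h i
      exact h i.1 (by omega)
    · intro h i hi
      exact h ⟨i, by omega⟩

theorem bellk_eq (k p : ℕ) : bellk k p = hb k p := by
  unfold bellk hb
  refine Nat.card_congr (Equiv.trans ?_ (chCongr k (fpIso p)))
  exact Equiv.subtypeEquivRight isKLevel_iff

theorem card_ch (k : ℕ) (α : Type*) [Fintype α] :
    Nat.card (Ch k (Setoid α)) = hb k (Fintype.card α) :=
  Nat.card_congr (chCongr k (setoidCongr (Fintype.equivFin α)))

theorem hb_zero (p : ℕ) : hb 0 p = 1 := by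
  unfold hb
  rw [Nat.card_eq_one_iff_unique]
  refine ⟨⟨fun a b => Subtype.ext (funext fun i => i.elim0)⟩, ⟨⟨fun i => i.elim0, fun i => i.elim0⟩⟩⟩

theorem hb_zero_right (k : ℕ) : hb k 0 = 1 := by
  unfold hb
  rw [Nat.card_eq_one_iff_unique]
  refine ⟨⟨fun a b => Subtype.ext (funext fun i => ?_)⟩, ⟨⟨fun i => ⊤, fun _ _ _ => le_rfl⟩⟩⟩
  ext x; exact x.elim0

instance {k : ℕ} {α : Type*} [Finite α] : Finite (Ch k (Setoid α)) := by
  have : Finite (Setoid α) := by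
    apply Finite.of_injective (fun s : Setoid α => (fun x y => s x y : α → α → Prop))
    intro s t h
    ext x y
    exact iff_of_eq (congrFun (congrFun h x) y)
  unfold Ch
  infer_instance

/-- Glue setoids on `B` and its complement. -/
def glue {α : Type*} {B : Finset α} (U : Setoid {x // x ∈ B}) (V : Setoid {x // x ∉ B}) :
    Setoid α where
  r x y := (∃ hx hy, U ⟨x, hx⟩ ⟨y, hy⟩) ∨ (∃ hx hy, V ⟨x, hx⟩ ⟨y, hy⟩)
  iseqv := by
    refine ⟨?_, ?_, ?_⟩
    · intro x
      by_cases h : x ∈ B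
      · exact Or.inl ⟨h, h, U.refl _⟩
      · exact Or.inr ⟨h, h, V.refl _⟩
    · rintro x y (⟨h, h', h2⟩ | ⟨h, h', h2⟩)
      · exact Or.inl ⟨h', h, U.symm h2⟩
      · exact Or.inr ⟨h', h, V.symm h2⟩
    · rintro x y z (⟨h, h', h2⟩ | ⟨h, h', h2⟩) (⟨g, g', g2⟩ | ⟨g, g', g2⟩)
      · exact Or.inl ⟨h, g', U.trans h2 g2⟩
      · exact absurd h' g
      · exact absurd g h'
      · exact Or.inr ⟨h, g', V.trans h2 g2⟩

theorem glue_def {α : Type*} {B : Finset α} (U : Setoid {x // x ∈ B}) (V : Setoid {x // x ∉ B})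
    (x y : α) : glue U V x y ↔
      (∃ hx hy, U ⟨x, hx⟩ ⟨y, hy⟩) ∨ (∃ hx hy, V ⟨x, hx⟩ ⟨y, hy⟩) := Iff.rfl

theorem glue_mono {α : Type*} {B : Finset α} {U U' : Setoid {x // x ∈ B}}
    {V V' : Setoid {x // x ∉ B}} (h : U ≤ U') (h' : V ≤ V') : glue U V ≤ glue U' V' := by
  rintro x y (⟨a, b, c⟩ | ⟨a, b, c⟩)
  · exact Or.inl ⟨a, b, h c⟩
  · exact Or.inr ⟨a, b, h' c⟩

theorem comap_glue_left {α : Type*} {B : Finset α} (U : Setoid {x // x ∈ B})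
    (V : Setoid {x // x ∉ B}) : (glue U V).comap Subtype.val = U := by
  ext x y
  rw [Setoid.comap_rel, glue_def]
  simp [x.2, y.2]

theorem comap_glue_right {α : Type*} {B : Finset α} (U : Setoid {x // x ∈ B})
    (V : Setoid {x // x ∉ B}) : (glue U V).comap Subtype.val = V := by
  ext x y
  rw [Setoid.comap_rel, glue_def]
  simp [x.2, y.2]

theorem glue_comap {α : Type*} {B : Finset α} (T : Setoid α)
    (h : ∀ x y, T x y → (x ∈ B ↔ y ∈ B)) :
    glue (B := B) (T.comap Subtype.val) (T.comap Subtype.val) = T := by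
  ext x y
  rw [glue_def]
  simp only [Setoid.comap_rel]
  constructor
  · rintro (⟨_, _, c⟩ | ⟨_, _, c⟩) <;> exact c
  · intro hT
    have := h x y hT
    by_cases hx : x ∈ B
    · exact Or.inl ⟨hx, this.1 hx, hT⟩
    · exact Or.inr ⟨hx, fun hy => hx (this.2 hy), hT⟩

/-- Chains whose top class of `a0` is `B`. -/
def fiberEquiv {α : Type*} (k : ℕ) (a0 : α) (B : Finset α) (ha : a0 ∈ B) :
    {T : Ch (k + 1) (Setoid α) // ∀ x, T.1 0 a0 x ↔ x ∈ B} ≃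
      Ch k (Setoid {x // x ∈ B}) × Ch (k + 1) (Setoid {x // x ∉ B}) where
  toFun T := ⟨⟨fun i => (T.1.1 i.succ).comap Subtype.val,
      fun i j h x y hxy => T.1.2 (Fin.succ_le_succ_iff.2 h) hxy⟩,
    ⟨fun i => (T.1.1 i).comap Subtype.val, fun i j h x y hxy => T.1.2 h hxy⟩⟩
  invFun UV := ⟨⟨fun i => glue (Fin.cases ⊤ UV.1.1 i) (UV.2.1 i), by
      intro i j h
      refine glue_mono ?_ (UV.2.2 h)
      induction i using Fin.cases with
      | zero => exact le_top
      | succ i =>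
        induction j using Fin.cases with
        | zero => exact absurd h (by simp)
        | succ j => exact UV.1.2 (Fin.succ_le_succ_iff.1 h)⟩, by
      intro x
      change glue ⊤ (UV.2.1 0) a0 x ↔ _
      rw [glue_def]
      constructor
      · rintro (⟨_, h, _⟩ | ⟨h, _, _⟩)
        · exact h
        · exact absurd ha h
      · intro h
        exact Or.inl ⟨ha, h, trivial⟩⟩
  left_inv := by
    rintro ⟨T, hT⟩
    apply Subtype.ext
    apply Subtype.ext
    funext i
    have hsat : ∀ i x y, T.1 i x y → (x ∈ B ↔ y ∈ B) := by
      intro i x y h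
      have h0 : T.1 0 x y := T.2 (Fin.zero_le i) h
      rw [← hT, ← hT]
      exact ⟨fun h1 => (T.1 0).trans h1 h0, fun h1 => (T.1 0).trans h1 ((T.1 0).symm h0)⟩
    refine Eq.trans ?_ (glue_comap (T.1 i) (hsat i))
    change glue _ _ = _
    congr 1
    induction i using Fin.cases with
    | zero =>
      change ⊤ = _
      symm
      rw [eq_top_iff]
      intro x y _
      exact (T.1 0).trans ((T.1 0).symm ((hT x).2 x.2)) ((hT y).2 y.2)
    | succ i => rfl
  right_inv := by
    rintro ⟨U, V⟩
    apply Prod.ext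
    · apply Subtype.ext
      funext i
      exact comap_glue_left _ _
    · apply Subtype.ext
      funext i
      exact comap_glue_right _ _

open Classical in
theorem hb_rec (k p : ℕ) : hb (k + 1) (p + 1) =
    ∑ i ∈ Finset.range (p + 1), p.choose i * (hb k (i + 1) * hb (k + 1) (p - i)) := by
  set α := Fin (p + 1)
  have h1 : hb (k + 1) (p + 1) = ∑ B : Finset α,
      Nat.card {T : Ch (k + 1) (Setoid α) // ∀ x, T.1 0 0 x ↔ x ∈ B} := by
    have e := Equiv.sigmaFiberEquiv (fun T : Ch (k + 1) (Setoid α) =>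
      ({x | T.1 0 0 x} : Finset α))
    unfold hb
    rw [← Nat.card_congr e, Nat.card_sigma]
    refine Finset.sum_congr rfl fun B _ => Nat.card_congr ?_
    refine Equiv.subtypeEquivRight fun T => ?_
    rw [Finset.ext_iff]
    simp
  have h2 : ∀ B : Finset α, Nat.card {T : Ch (k + 1) (Setoid α) // ∀ x, T.1 0 0 x ↔ x ∈ B} =
      if (0 : α) ∈ B then hb k B.card * hb (k + 1) (p + 1 - B.card) else 0 := by
    intro B
    split_ifs with h
    · rw [Nat.card_congr (fiberEquiv k 0 B h), Nat.card_prod, card_ch, card_ch]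
      congr 2
      · simp
      · rw [Fintype.card_subtype_compl]
        simp [α]
    · have : IsEmpty {T : Ch (k + 1) (Setoid α) // ∀ x, T.1 0 0 x ↔ x ∈ B} :=
        ⟨fun T => h ((T.2 0).1 ((T.1.1 0).refl 0))⟩
      simp
  rw [h1, Finset.sum_congr rfl fun B _ => h2 B, ← Finset.sum_filter]
  have h3 := Finset.sum_powerset_apply_card
    (fun i => hb k (i + 1) * hb (k + 1) (p - i)) (x := (Finset.univ.erase (0 : α)))
  have h4 : (Finset.univ.erase (0 : α)).card = p := by simp [α]
  rw [h4] at h3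
  simp only [smul_eq_mul] at h3
  rw [← h3]
  symm
  refine Finset.sum_bij (fun S _ => insert (0 : α) S) ?_ ?_ ?_ ?_
  · intro S _; simp
  · intro S hS S' hS' h
    have a1 : (0 : α) ∉ S := fun hh => by
      have := Finset.mem_powerset.1 hS hh
      simp at this
    have a2 : (0 : α) ∉ S' := fun hh => by
      have := Finset.mem_powerset.1 hS' hh
      simp at this
    rw [← Finset.erase_insert a1, h, Finset.erase_insert a2]
  · intro B hB
    refine ⟨B.erase 0, ?_, ?_⟩
    · rw [Finset.mem_powerset]
      exact Finset.erase_subset_erase _ (Finset.subset_univ _)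
    · exact Finset.insert_erase (by simpa using hB)
  · intro S hS
    have a1 : (0 : α) ∉ S := fun hh => by
      have := Finset.mem_powerset.1 hS hh
      simp at this
    rw [Finset.card_insert_of_notMem a1]
    congr 2
    omega

end BellAux

/-! ### Part 2: normalised coefficients -/

namespace BellAux

open Finset

/-- Exponential coefficients. -/
noncomputable def ac (k p : ℕ) : ℝ := (hb k p : ℝ) / (p.factorial : ℝ)

theorem ac_nonneg (k p : ℕ) : 0 ≤ ac k p := by unfold ac; positivity

theorem ac_zero_right (k : ℕ) : ac k 0 = 1 := by simp [ac, hb_zero_right]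

theorem ac_zero (p : ℕ) : ac 0 p = 1 / (p.factorial : ℝ) := by simp [ac, hb_zero]

theorem hb_pos (k p : ℕ) : 1 ≤ hb k p := by
  unfold hb
  have : Nonempty (Ch k (Setoid (Fin p))) := ⟨⟨fun _ => ⊤, fun _ _ _ => le_rfl⟩⟩
  exact Nat.card_pos

theorem ac_ge (k p : ℕ) : 1 / (p.factorial : ℝ) ≤ ac k p := by
  unfold ac
  have : (1 : ℝ) ≤ hb k p := by exact_mod_cast hb_pos k p
  gcongr

theorem ac_rec (k p : ℕ) : ((p : ℝ) + 1) * ac (k + 1) (p + 1) =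
    ∑ i ∈ range (p + 1), ((i : ℝ) + 1) * ac k (i + 1) * ac (k + 1) (p - i) := by
  have h : ((p : ℝ) + 1) * ac (k + 1) (p + 1) = (hb (k + 1) (p + 1) : ℝ) / (p.factorial : ℝ) := by
    unfold ac
    rw [Nat.factorial_succ]
    push_cast
    have : (p.factorial : ℝ) ≠ 0 := by positivity
    field_simp
  rw [h, hb_rec]
  push_cast
  rw [Finset.sum_div]
  refine Finset.sum_congr rfl fun i hi => ?_
  have hi' : i ≤ p := by simpa [Nat.lt_succ_iff] using hi
  rw [Nat.cast_choose ℝ hi']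
  unfold ac
  rw [Nat.factorial_succ i]
  push_cast
  have h1 : (p.factorial : ℝ) ≠ 0 := by positivity
  have h2 : (i.factorial : ℝ) ≠ 0 := by positivity
  have h3 : ((p - i).factorial : ℝ) ≠ 0 := by positivity
  field_simp

theorem ac_split (k q m : ℕ) (hm : 1 ≤ m) :
    (m : ℝ) * ac k m * ac (k + 1) q ≤ ((q + m : ℕ) : ℝ) * ac (k + 1) (q + m) := by
  obtain ⟨i, rfl⟩ : ∃ i, m = i + 1 := ⟨m - 1, by omega⟩
  have h := ac_rec k (q + i)
  have h1 := Finset.single_le_sum (s := range (q + i + 1))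
    (f := fun i_1 : ℕ => ((i_1 : ℝ) + 1) * ac k (i_1 + 1) * ac (k + 1) (q + i - i_1))
    (fun j _ => by
      have := ac_nonneg k (j + 1)
      have := ac_nonneg (k + 1) (q + i - j)
      positivity) (a := i) (by simp)
  rw [← h] at h1
  simp only [Nat.add_sub_cancel] at h1
  push_cast at h1 ⊢
  rw [← add_assoc] at *
  exact h1

theorem ac_mono_succ (k p : ℕ) : ac k p ≤ ac (k + 1) p := by
  rcases Nat.eq_zero_or_pos p with rfl | hp
  · simp [ac_zero_right]
  · have h := ac_split k 0 p hp
    rw [ac_zero_right, mul_one, Nat.zero_add] at h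
    have : (0 : ℝ) < p := by exact_mod_cast hp
    exact le_of_mul_le_mul_left h this

theorem ac_blocks (k m : ℕ) (hm : 1 ≤ m) (s : ℕ) (P : ℝ) :
    ∀ r : ℕ, ((m * r + s : ℕ) : ℝ) ≤ P →
      (ac k m / P) ^ r / (s.factorial : ℝ) ≤ ac (k + 1) (m * r + s) := by
  intro r
  induction r with
  | zero =>
    intro _
    simpa using ac_ge (k + 1) s
  | succ r ih =>
    intro hP
    have h1 : m * (r + 1) + s = (m * r + s) + m := by ring
    have hm' : (1 : ℝ) ≤ m := by exact_mod_cast hm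
    have hle : ((m * r + s : ℕ) : ℝ) ≤ P := le_trans (by exact_mod_cast (by omega)) hP
    have hP' : ((m * r + s + m : ℕ) : ℝ) ≤ P := by rw [← h1]; exact hP
    have ih' := ih hle
    have h2 := ac_split k (m * r + s) m hm
    rw [h1]
    have hPpos : 0 < P := lt_of_lt_of_le (by
      push_cast
      positivity) hP'
    have a1 := ac_nonneg k m
    have a2 := ac_nonneg (k + 1) (m * r + s)
    have a3 := ac_nonneg (k + 1) (m * r + s + m)
    have h3 : ac k m * ac (k + 1) (m * r + s) ≤ P * ac (k + 1) (m * r + s + m) := by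
      calc ac k m * ac (k + 1) (m * r + s) = 1 * ac k m * ac (k + 1) (m * r + s) := by ring
        _ ≤ m * ac k m * ac (k + 1) (m * r + s) := by gcongr
        _ ≤ _ := h2
        _ ≤ _ := by gcongr
    calc (ac k m / P) ^ (r + 1) / (s.factorial : ℝ)
        = (ac k m / P) * ((ac k m / P) ^ r / (s.factorial : ℝ)) := by ring
      _ ≤ (ac k m / P) * ac (k + 1) (m * r + s) := by gcongr
      _ = (ac k m * ac (k + 1) (m * r + s)) / P := by ring
      _ ≤ _ := by
        rw [div_le_iff₀ hPpos]
        linarith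

/-- Lower bound by full binary merging. -/
theorem ac_desc : ∀ k P : ℕ, ((k.descFactorial P : ℕ) : ℝ) / 2 ^ P ≤ ac k (P + 1) := by
  intro k
  induction k with
  | zero =>
    intro P
    cases P with
    | zero => simp [ac_zero]
    | succ P => simpa using ac_nonneg 0 (P + 2)
  | succ k ih =>
    intro P
    cases P with
    | zero =>
      refine le_trans ?_ (ac_ge (k + 1) 1)
      simp
    | succ P =>
      -- p + 1 = P + 2, p = P + 1
      have h := ac_rec k (P + 1)
      rw [Finset.sum_range_succ] at h
      simp only [Nat.sub_self, ac_zero_right, mul_one] at h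
      have h1 : ∀ i ∈ range (P + 1), ((i : ℝ) + 1) * ((k.descFactorial P : ℕ) : ℝ) / 2 ^ P ≤
          ((i : ℝ) + 1) * ac k (i + 1) * ac (k + 1) (P + 1 - i) := by
        intro i hi
        have hi' : i ≤ P := by simpa [Nat.lt_succ_iff] using hi
        obtain ⟨j, rfl⟩ := Nat.exists_eq_add_of_le hi'
        have e1 : i + j + 1 - i = j + 1 := by omega
        rw [e1]
        have b1 := ih i
        have b2 := (ih j).trans (ac_mono_succ k (j + 1))
        have b3 : ((k.descFactorial (i + j) : ℕ) : ℝ) ≤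
            (k.descFactorial i : ℝ) * (k.descFactorial j : ℝ) := by
          have : k.descFactorial (i + j) ≤ k.descFactorial i * k.descFactorial j := by
            rw [← Nat.descFactorial_mul_descFactorial (Nat.le_add_right i j), Nat.add_sub_cancel_left,
              mul_comm]
            exact Nat.mul_le_mul_left _ (Nat.descFactorial_le _ (Nat.sub_le _ _))
          exact_mod_cast this
        have a1 := ac_nonneg k (i + 1)
        calc ((i : ℝ) + 1) * ((k.descFactorial (i + j) : ℕ) : ℝ) / 2 ^ (i + j)
            ≤ ((i : ℝ) + 1) * ((k.descFactorial i : ℝ) * (k.descFactorial j : ℝ)) / 2 ^ (i + j) := by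
              gcongr
          _ = ((i : ℝ) + 1) * ((k.descFactorial i : ℝ) / 2 ^ i) * ((k.descFactorial j : ℝ) / 2 ^ j) := by
              rw [pow_add]; field_simp
          _ ≤ _ := by gcongr
      have h2 := Finset.sum_le_sum h1
      have h3 : ∑ i ∈ range (P + 1), ((i : ℝ) + 1) * ((k.descFactorial P : ℕ) : ℝ) / 2 ^ P =
          ((P : ℝ) + 1) * (P + 2) / 2 * (((k.descFactorial P : ℕ) : ℝ) / 2 ^ P) := by
        have : ∀ n : ℕ, ∑ i ∈ range n, ((i : ℝ) + 1) = (n : ℝ) * (n + 1) / 2 := by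
          intro n
          induction n with
          | zero => simp
          | succ n ihn => rw [Finset.sum_range_succ, ihn]; push_cast; ring
        rw [← Finset.sum_div, ← Finset.sum_mul, this]
        push_cast
        ring
      rw [h3] at h2
      have h4 := ih (P + 1)
      have h5 : (((k + 1).descFactorial (P + 1) : ℕ) : ℝ) =
          ((k.descFactorial (P + 1) : ℕ) : ℝ) + (P + 1) * ((k.descFactorial P : ℕ) : ℝ) := by
        rcases le_or_gt P k with hPk | hPk
        · rw [Nat.succ_descFactorial_succ, Nat.descFactorial_succ]
          push_cast [Nat.cast_sub hPk]
          ring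
        · rw [Nat.descFactorial_of_lt hPk, Nat.descFactorial_of_lt (show k < P + 1 by omega),
            Nat.descFactorial_of_lt (show k + 1 < P + 1 by omega)]
          simp
      rw [h5]
      push_cast at h
      set D := ((k.descFactorial P : ℕ) : ℝ)
      set E := ((k.descFactorial (P + 1) : ℕ) : ℝ)
      have hp2 : (0 : ℝ) < (P : ℝ) + 1 + 1 := by positivity
      have key : ((P : ℝ) + 1 + 1) * ((E + (P + 1) * D) / 2 ^ (P + 1)) ≤
          ((P : ℝ) + 1 + 1) * ac (k + 1) (P + 1 + 1) := by
        rw [h]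
        have : ((P : ℝ) + 1 + 1) * ((E + (P + 1) * D) / 2 ^ (P + 1)) =
          ((P : ℝ) + 1) * (P + 2) / 2 * (D / 2 ^ P) + ((P : ℝ) + 1 + 1) * (E / 2 ^ (P + 1)) := by
          rw [pow_succ]; field_simp; ring
        rw [this]
        gcongr
      exact le_of_mul_le_mul_left key hp2

/-! ### Upper bound -/

/-- `e^x - 1`. -/
noncomputable def ef (x : ℝ) : ℝ := Real.exp x - 1

theorem ef_mono {x y : ℝ} (h : x ≤ y) : ef x ≤ ef y := by
  unfold ef; have := Real.exp_le_exp.2 h; linarith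

theorem ef_nonneg {x : ℝ} (h : 0 ≤ x) : 0 ≤ ef x := by
  unfold ef; have := Real.add_one_le_exp x; linarith

theorem ef_iter_mono (n : ℕ) {x y : ℝ} (h : x ≤ y) : ef^[n] x ≤ ef^[n] y := by
  have : Monotone ef := fun _ _ h => ef_mono h
  exact this.iterate n h

theorem ef_iter_nonneg (n : ℕ) {x : ℝ} (h : 0 ≤ x) : 0 ≤ ef^[n] x := by
  induction n with
  | zero => simpa
  | succ n ih => rw [Function.iterate_succ_apply']; exact ef_nonneg ih

/-- Truncated generating function. -/
noncomputable def gf (k P : ℕ) (x : ℝ) : ℝ := ∑ p ∈ range (P + 1), ac k p * x ^ p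

/-- Its derivative. -/
noncomputable def gf' (k P : ℕ) (x : ℝ) : ℝ :=
  ∑ p ∈ range P, ((p : ℝ) + 1) * ac k (p + 1) * x ^ p

theorem gf_hasDeriv (k P : ℕ) (x : ℝ) : HasDerivAt (gf k P) (gf' k P x) x := by
  have h1 : HasDerivAt (fun x : ℝ => ∑ p ∈ range (P + 1), ac k p * x ^ p)
      (∑ p ∈ range (P + 1), ac k p * ((p : ℝ) * x ^ (p - 1))) x := by
    apply HasDerivAt.fun_sum
    intro p _
    exact (hasDerivAt_pow p x).const_mul _
  refine HasDerivAt.congr_deriv h1 ?_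
  rw [Finset.sum_range_succ']
  simp only [Nat.cast_zero, zero_mul, mul_zero, add_zero, Nat.add_sub_cancel]
  unfold gf'
  refine Finset.sum_congr rfl fun i _ => ?_
  push_cast
  ring

theorem gf'_le (k P : ℕ) (x : ℝ) (hx : 0 ≤ x) : gf' (k + 1) P x ≤ gf' k P x * gf (k + 1) P x := by
  have h1 : gf' (k + 1) P x = ∑ m ∈ range P, ∑ i ∈ range (m + 1),
      (fun i j : ℕ => (((i : ℝ) + 1) * ac k (i + 1) * x ^ i) * (ac (k + 1) j * x ^ j)) i (m - i) := by
    unfold gf'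
    refine Finset.sum_congr rfl fun p _ => ?_
    rw [ac_rec, Finset.sum_mul]
    refine Finset.sum_congr rfl fun i hi => ?_
    have hi' : i ≤ p := by simpa [Nat.lt_succ_iff] using hi
    obtain ⟨j, rfl⟩ := Nat.exists_eq_add_of_le hi'
    simp only [Nat.add_sub_cancel_left, pow_add]
    ring
  rw [h1, Finset.sum_range_diag_flip P
    (fun i j : ℕ => (((i : ℝ) + 1) * ac k (i + 1) * x ^ i) * (ac (k + 1) j * x ^ j))]
  unfold gf' gf
  rw [Finset.sum_mul]
  refine Finset.sum_le_sum fun i _ => ?_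
  rw [← Finset.mul_sum]
  have a1 := ac_nonneg k (i + 1)
  apply mul_le_mul_of_nonneg_left _ (by positivity)
  refine Finset.sum_le_sum_of_subset_of_nonneg ?_ ?_
  · intro j hj; simp at hj ⊢; omega
  · intro j _ _
    have := ac_nonneg (k + 1) j
    positivity

theorem gf_zero (k P : ℕ) : gf k P 0 = 1 := by
  unfold gf
  rw [Finset.sum_range_succ']
  simp [ac_zero_right]

theorem gf_step (k P : ℕ) (x : ℝ) (hx : 0 ≤ x) :
    gf (k + 1) P x ≤ Real.exp (gf k P x - 1) := by
  have hd : ∀ y, HasDerivAt (fun y => gf (k + 1) P y * Real.exp (-(gf k P y)))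
      (gf' (k + 1) P y * Real.exp (-(gf k P y)) +
        gf (k + 1) P y * (Real.exp (-(gf k P y)) * (-(gf' k P y)))) y := fun y =>
    (gf_hasDeriv (k + 1) P y).mul ((gf_hasDeriv k P y).neg.exp)
  have hanti : AntitoneOn (fun y => gf (k + 1) P y * Real.exp (-(gf k P y))) (Set.Ici 0) := by
    apply antitoneOn_of_deriv_nonpos (convex_Ici 0)
    · exact fun y _ => (hd y).continuousAt.continuousWithinAt
    · exact fun y _ => (hd y).differentiableAt.differentiableWithinAt
    · intro y hy
      rw [(hd y).deriv]
      have hy' : 0 ≤ y := interior_subset hy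
      have := gf'_le k P y hy'
      have he := Real.exp_pos (-(gf k P y))
      nlinarith
  have h := hanti (Set.mem_Ici.2 le_rfl) (Set.mem_Ici.2 hx) hx
  simp only [gf_zero] at h
  have e1 : Real.exp (gf k P x - 1) = Real.exp (gf k P x) * Real.exp (-1) := by
    rw [← Real.exp_add]; ring_nf
  have e2 : Real.exp (gf k P x) * Real.exp (-(gf k P x)) = 1 := by
    rw [← Real.exp_add]; simp
  rw [e1]
  have e3 := Real.exp_pos (gf k P x)
  calc gf (k + 1) P x = Real.exp (gf k P x) * (gf (k + 1) P x * Real.exp (-(gf k P x))) := by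
        rw [mul_left_comm, e2, mul_one]
    _ ≤ Real.exp (gf k P x) * (1 * Real.exp (-1)) := by gcongr
    _ = _ := by ring

theorem gf_le (k P : ℕ) (x : ℝ) (hx : 0 ≤ x) : gf k P x ≤ 1 + ef^[k + 1] x := by
  induction k with
  | zero =>
    have := Real.sum_le_exp_of_nonneg hx (P + 1)
    simp only [zero_add, Function.iterate_one, ef]
    unfold gf
    refine le_trans (le_of_eq ?_) (this.trans (by linarith))
    refine Finset.sum_congr rfl fun i _ => ?_
    rw [ac_zero]; ring
  | succ k ih =>
    refine (gf_step k P x hx).trans ?_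
    rw [Function.iterate_succ_apply' ef (k + 1)]
    have := Real.exp_le_exp.2 (show gf k P x - 1 ≤ ef^[k + 1] x by linarith)
    unfold ef at *
    linarith

theorem ac_le (k p : ℕ) (hp : 1 ≤ p) (x : ℝ) (hx : 0 ≤ x) : ac k p * x ^ p ≤ ef^[k + 1] x := by
  have h := gf_le k p x hx
  unfold gf at h
  rw [Finset.sum_range_succ'] at h
  simp only [ac_zero_right, pow_zero, mul_one] at h
  have h2 := Finset.single_le_sum (s := range p) (f := fun i => ac k (i + 1) * x ^ (i + 1))
    (fun j _ => by have := ac_nonneg k (j + 1); positivity) (a := p - 1) (by simp; omega)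
  simp only [Nat.sub_add_cancel hp] at h2
  linarith

theorem ef_le_mobius {y : ℝ} (h1 : y < 1) : ef y ≤ y / (1 - y) := by
  have h := Real.one_sub_le_exp_neg y
  have h2 : (1 - y) * Real.exp y ≤ 1 := by
    calc (1 - y) * Real.exp y ≤ Real.exp (-y) * Real.exp y := by gcongr
      _ = 1 := by rw [← Real.exp_add]; simp
  unfold ef
  rw [le_div_iff₀ (by linarith)]
  linarith

theorem ef_iter_mobius (x : ℝ) (hx : 0 ≤ x) : ∀ n : ℕ, n * x < 1 → ef^[n] x ≤ x / (1 - n * x) := by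
  intro n
  induction n with
  | zero => intro _; simp
  | succ n ih =>
    intro h
    push_cast at h ⊢
    have h1 : n * x < 1 := by nlinarith
    have h2 : 0 < 1 - n * x := by linarith
    have h3 : x / (1 - n * x) < 1 := by rw [div_lt_one h2]; linarith
    rw [Function.iterate_succ_apply']
    refine (ef_mono (ih h1)).trans ((ef_le_mobius h3).trans (le_of_eq ?_))
    have h4 : 1 - ((n : ℝ) + 1) * x ≠ 0 := by linarith
    have h5 : 1 - (n : ℝ) * x ≠ 0 := h2.ne'
    have : 1 - x / (1 - n * x) = (1 - ((n : ℝ) + 1) * x) / (1 - n * x) := by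
      rw [eq_div_iff h5, sub_mul, div_mul_cancel₀ _ h5]; ring
    rw [this, div_div_div_cancel_right₀ h5]

theorem ef_iter_lin (y : ℝ) (hy : 0 ≤ y) (hy1 : y ≤ 1) (n : ℕ) : ef^[n] y ≤ y * ef^[n] 1 := by
  induction n with
  | zero => simp
  | succ n ih =>
    rw [Function.iterate_succ_apply', Function.iterate_succ_apply']
    refine (ef_mono ih).trans ?_
    have h := convexOn_exp.2 (Set.mem_univ (ef^[n] 1)) (Set.mem_univ (0 : ℝ)) hy
      (sub_nonneg.2 hy1) (by ring)
    simp only [smul_eq_mul, mul_zero, add_zero, Real.exp_zero, mul_one] at h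
    unfold ef at *
    linarith

/-- Tower function. -/
noncomputable def tw (n : ℕ) : ℝ := Real.exp^[n] 1

theorem tw_zero : tw 0 = 1 := rfl

theorem tw_succ (n : ℕ) : tw (n + 1) = Real.exp (tw n) := by
  unfold tw; rw [Function.iterate_succ_apply']

theorem tw_ge (n : ℕ) : (n : ℝ) + 1 ≤ tw n := by
  induction n with
  | zero => simp [tw_zero]
  | succ n ih =>
    rw [tw_succ]
    have := Real.add_one_le_exp (tw n)
    push_cast
    linarith

theorem one_le_tw (n : ℕ) : 1 ≤ tw n := by
  have := tw_ge n
  have : (0 : ℝ) ≤ n := by positivity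
  linarith

theorem ef_iter_le_tw (n : ℕ) : ef^[n] 1 ≤ tw n := by
  induction n with
  | zero => simp [tw_zero]
  | succ n ih =>
    rw [Function.iterate_succ_apply', tw_succ]
    have := Real.exp_le_exp.2 ih
    unfold ef at *
    linarith

theorem exists_iterLog_le (n : ℕ) : ∀ x : ℝ, 0 < x → x ≤ tw n → ∃ j ≤ n, iterLog j x ≤ 1 := by
  induction n with
  | zero => intro x _ h; exact ⟨0, le_rfl, h⟩
  | succ n ih =>
    intro x hx h
    rcases le_or_gt x 1 with h1 | h1
    · exact ⟨0, Nat.zero_le _, h1⟩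
    · rw [tw_succ] at h
      obtain ⟨j, hj, hj'⟩ := ih (Real.log x) (Real.log_pos h1) ((Real.log_le_iff_le_exp hx).2 h)
      refine ⟨j + 1, by omega, ?_⟩
      unfold iterLog at *
      rwa [Function.iterate_succ_apply]

theorem logStar_le (n : ℕ) (x : ℝ) (hx : 0 < x) (h : x ≤ tw n) : logStar x ≤ n := by
  obtain ⟨j, hj, hj'⟩ := exists_iterLog_le n x hx h
  exact (Nat.sInf_le hj').trans hj

theorem le_tw_aux (n : ℕ) : ∀ x : ℝ, (∀ j < n, 1 < iterLog j x) → iterLog n x ≤ 1 → x ≤ tw n := by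
  induction n with
  | zero => intro x _ h; exact h
  | succ n ih =>
    intro x h h1
    have hx : 1 < x := h 0 (Nat.succ_pos n)
    rw [tw_succ, ← Real.log_le_iff_le_exp (by linarith)]
    apply ih
    · intro j hj
      have := h (j + 1) (by omega)
      unfold iterLog at *
      rwa [Function.iterate_succ_apply] at this
    · unfold iterLog at *
      rwa [Function.iterate_succ_apply] at h1

theorem logStar_spec (p : ℕ) (hp : 2 ≤ p) :
    1 ≤ logStar p ∧ (p : ℝ) ≤ tw (logStar p) ∧ tw (logStar p - 1) < p := by
  have hp' : (2 : ℝ) ≤ p := by exact_mod_cast hp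
  have hne : {k : ℕ | iterLog k (p : ℝ) ≤ 1}.Nonempty := by
    obtain ⟨j, _, hj⟩ := exists_iterLog_le p p (by linarith) (by linarith [tw_ge p])
    exact ⟨j, hj⟩
  have h1 : iterLog (logStar p) (p : ℝ) ≤ 1 := Nat.sInf_mem hne
  have h2 : 1 ≤ logStar p := by
    by_contra hcon
    have : logStar (p : ℝ) = 0 := by omega
    rw [this] at h1
    change (p : ℝ) ≤ 1 at h1
    linarith
  refine ⟨h2, ?_, ?_⟩
  · apply le_tw_aux _ _ _ h1
    intro j hj
    by_contra hcon
    have hmem : j ∈ {k : ℕ | iterLog k (p : ℝ) ≤ 1} := not_lt.1 hcon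
    have : logStar (p : ℝ) ≤ j := Nat.sInf_le hmem
    omega
  · by_contra hcon
    have := logStar_le (logStar (p : ℝ) - 1) p (by linarith) (not_lt.1 hcon)
    omega

theorem hb_upper (p : ℕ) (hp : 2 ≤ p) (N : ℕ) (hN : 1 ≤ N) :
    (hb (logStar p - 1 + N) p : ℝ) ≤ (2 * Real.exp 1 * p) ^ p * (N : ℝ) ^ (p - 1) := by
  obtain ⟨hl, _, htw⟩ := logStar_spec p hp
  set l := logStar (p : ℝ)
  have hN' : (1 : ℝ) ≤ N := by exact_mod_cast hN
  have hNpos : (0 : ℝ) < N := by linarith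
  set x : ℝ := 1 / (2 * N) with hxdef
  have hx : 0 ≤ x := by positivity
  have h1 := ac_le (l - 1 + N) p (by omega) x hx
  have e1 : l - 1 + N + 1 = l + N := by omega
  rw [e1, Function.iterate_add_apply] at h1
  have hNx : N * x = 1 / 2 := by rw [hxdef]; field_simp
  have h2 : ef^[N] x ≤ 1 / N := by
    refine (ef_iter_mobius x hx N (by rw [hNx]; norm_num)).trans (le_of_eq ?_)
    rw [hNx, hxdef]; field_simp; norm_num
  have h3 : ef^[l] (ef^[N] x) ≤ 1 / N * Real.exp p := by
    refine (ef_iter_mono l h2).trans ?_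
    refine (ef_iter_lin (1 / N) (by positivity) (by rw [div_le_one hNpos]; exact hN') l).trans ?_
    have : ef^[l] 1 ≤ Real.exp p := by
      refine (ef_iter_le_tw l).trans ?_
      obtain ⟨n, hn⟩ : ∃ n, l = n + 1 := ⟨l - 1, by omega⟩
      rw [hn, tw_succ]
      rw [hn] at htw
      exact Real.exp_le_exp.2 htw.le
    gcongr
  have h4 := h1.trans h3
  have h5 : ac (l - 1 + N) p ≤ 1 / N * Real.exp p * (2 * N) ^ p := by
    have : x ^ p * (2 * (N : ℝ)) ^ p = 1 := by
      rw [← mul_pow, hxdef, one_div, inv_mul_cancel₀ (by positivity), one_pow]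
    calc ac (l - 1 + N) p = ac (l - 1 + N) p * x ^ p * (2 * (N : ℝ)) ^ p := by
          rw [mul_assoc, this, mul_one]
      _ ≤ _ := by gcongr
  unfold ac at h5
  rw [div_le_iff₀ (by positivity)] at h5
  refine h5.trans ?_
  have h6 : ((p.factorial : ℕ) : ℝ) ≤ (p : ℝ) ^ p := by exact_mod_cast Nat.factorial_le_pow p
  have h7 : (1 / (N : ℝ)) * (N : ℝ) ^ p = (N : ℝ) ^ (p - 1) := by
    obtain ⟨q, rfl⟩ : ∃ q, p = q + 1 := ⟨p - 1, by omega⟩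
    rw [pow_succ, Nat.add_sub_cancel]; field_simp
  have h8 : Real.exp p = Real.exp 1 ^ p := by rw [← Real.exp_nat_mul, mul_one]
  calc 1 / (N : ℝ) * Real.exp p * (2 * N) ^ p * (p.factorial : ℝ)
      ≤ 1 / (N : ℝ) * Real.exp p * (2 * N) ^ p * (p : ℝ) ^ p := by gcongr
    _ = (1 / (N : ℝ) * (N : ℝ) ^ p) * (2 ^ p * Real.exp 1 ^ p * (p : ℝ) ^ p) := by
      rw [h8, mul_pow]; ring
    _ = _ := by rw [h7, mul_pow, mul_pow]; ring

end BellAux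

/-! ### Part 3: lower bound -/

namespace BellAux

open Finset

theorem ac_mono {k k' : ℕ} (h : k ≤ k') (p : ℕ) : ac k p ≤ ac k' p :=
  monotone_nat_of_le_succ (f := fun k => ac k p) (fun k => ac_mono_succ k p) h

theorem factorial_ge (r : ℕ) : ((r : ℝ) / Real.exp 1) ^ r ≤ (r.factorial : ℝ) := by
  have h := Real.pow_div_factorial_le_exp (r : ℝ) (by positivity) r
  rw [div_le_iff₀ (by positivity)] at h
  have h8 : Real.exp r = Real.exp 1 ^ r := by rw [← Real.exp_nat_mul, mul_one]
  rw [div_pow, div_le_iff₀ (by positivity), ← h8]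
  linarith

theorem desc_ge (n r : ℕ) (h : r ≤ n) :
    (r.factorial : ℝ) * (n : ℝ) ^ r ≤ (n.descFactorial r : ℝ) * (r : ℝ) ^ r := by
  have h1 : r.factorial * n ^ r ≤ n.descFactorial r * r ^ r := by
    rw [← Nat.descFactorial_self r, Nat.descFactorial_eq_prod_range, Nat.descFactorial_eq_prod_range]
    have e : ∀ a : ℕ, a ^ r = ∏ _i ∈ range r, a := fun a => by simp
    rw [e n, e r, ← Finset.prod_mul_distrib, ← Finset.prod_mul_distrib]
    refine Finset.prod_le_prod' fun i hi => ?_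
    have hi' : i < r := by simpa using hi
    obtain ⟨b, rfl⟩ := Nat.exists_eq_add_of_le h
    obtain ⟨c, rfl⟩ := Nat.exists_eq_add_of_le hi'.le
    have e1 : i + c - i = c := by omega
    have e2 : i + c + b - i = c + b := by omega
    rw [e1, e2]
    nlinarith
  exact_mod_cast h1

theorem base_big (k p N : ℕ) (hp : 2 ≤ p) (hk : N ≤ k + 1) (hN : p ≤ N) :
    (1 / (4 * Real.exp 1)) ^ p * (N : ℝ) ^ (p - 1) ≤ ac k p := by
  obtain ⟨r, rfl⟩ : ∃ r, p = r + 1 := ⟨p - 1, by omega⟩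
  obtain ⟨n, rfl⟩ : ∃ n, N = n + 1 := ⟨N - 1, by omega⟩
  refine le_trans ?_ (ac_mono (show n ≤ k by omega) _)
  refine le_trans ?_ (ac_desc n r)
  have hr : (0 : ℝ) < r := by exact_mod_cast (by omega : 0 < r)
  have hn : (1 : ℝ) ≤ n := by exact_mod_cast (by omega : 1 ≤ n)
  have h1 := desc_ge n r (by omega)
  have h2 := factorial_ge r
  have h3 : ((n : ℝ) / Real.exp 1) ^ r ≤ (n.descFactorial r : ℝ) := by
    have h4 : ((r : ℝ) / Real.exp 1) ^ r * (n : ℝ) ^ r ≤ (n.descFactorial r : ℝ) * (r : ℝ) ^ r :=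
      le_trans (by gcongr) h1
    have h5 : ((r : ℝ) / Real.exp 1) ^ r * (n : ℝ) ^ r = ((n : ℝ) / Real.exp 1) ^ r * (r : ℝ) ^ r := by
      rw [div_pow, div_pow]; ring
    rw [h5] at h4
    exact le_of_mul_le_mul_right h4 (by positivity)
  have he : (1 : ℝ) ≤ Real.exp 1 := Real.one_le_exp (by norm_num)
  rw [Nat.add_sub_cancel, pow_succ]
  have h6 : 1 / (4 * Real.exp 1) ≤ 1 := by
    rw [div_le_one (by positivity)]; linarith
  calc (1 / (4 * Real.exp 1)) ^ r * (1 / (4 * Real.exp 1)) * ((n + 1 : ℕ) : ℝ) ^ r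
      ≤ (1 / (4 * Real.exp 1)) ^ r * 1 * ((n + 1 : ℕ) : ℝ) ^ r := by gcongr
    _ = (((n + 1 : ℕ) : ℝ) / (4 * Real.exp 1)) ^ r := by rw [mul_one, ← mul_pow]; ring
    _ ≤ ((n : ℝ) / Real.exp 1 / 2) ^ r := by
      refine pow_le_pow_left₀ (by positivity) ?_ r
      push_cast
      rw [div_div, div_le_div_iff₀ (by positivity) (by positivity)]
      nlinarith
    _ = ((n : ℝ) / Real.exp 1) ^ r / 2 ^ r := by rw [div_pow _ (2 : ℝ)]
    _ ≤ _ := by gcongr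

/-- The running constant. -/
noncomputable def cst (p : ℕ) : ℝ := Real.exp (-38 + 4 / Real.log p)

theorem cst_pos (p : ℕ) : 0 < cst p := Real.exp_pos _

theorem cst_le (p : ℕ) (hp : 2 ≤ p) : cst p ≤ Real.exp (-32) := by
  unfold cst
  apply Real.exp_le_exp.2
  have h := Real.log_two_gt_d9
  have h2 : Real.log 2 ≤ Real.log p := Real.log_le_log (by norm_num) (by exact_mod_cast hp)
  have : 4 / Real.log p ≤ 6 := by
    rw [div_le_iff₀ (by linarith)]; linarith
  linarith

theorem cst_ge (p : ℕ) : Real.exp (-38) ≤ cst p := by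
  unfold cst
  apply Real.exp_le_exp.2
  have : 0 ≤ 4 / Real.log p := div_nonneg (by norm_num) (Real.log_natCast_nonneg p)
  linarith

theorem base_case (k p N : ℕ) (hp : 2 ≤ p) (hk : N ≤ k + 1)
    (h : p ≤ N ∨ (p : ℝ) ≤ Real.exp 16) :
    cst p ^ p * (N : ℝ) ^ (p - 1) ≤ ac k p := by
  have hc := cst_le p hp
  have hc0 := (cst_pos p).le
  rcases le_or_gt p N with hN | hN
  · refine le_trans ?_ (base_big k p N hp hk hN)
    have : cst p ≤ 1 / (4 * Real.exp 1) := by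
      refine hc.trans ?_
      rw [Real.exp_neg, one_div]
      apply inv_anti₀ (by positivity)
      have e1 : Real.exp 32 = Real.exp 1 * Real.exp 31 := by rw [← Real.exp_add]; norm_num
      have e2 := Real.add_one_le_exp (31 : ℝ)
      rw [e1]
      have := Real.exp_pos 1
      nlinarith
    gcongr
  · have hM : (p : ℝ) ≤ Real.exp 16 := h.resolve_left (by omega)
    refine le_trans ?_ (ac_ge k p)
    have hppos : (0 : ℝ) < p := by exact_mod_cast (by omega : 0 < p)
    have h6 : ((p.factorial : ℕ) : ℝ) ≤ (p : ℝ) ^ p := by exact_mod_cast Nat.factorial_le_pow p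
    have h7 : (N : ℝ) ^ (p - 1) ≤ (p : ℝ) ^ p := by
      have : (N : ℝ) ≤ p := by exact_mod_cast hN.le
      calc (N : ℝ) ^ (p - 1) ≤ (p : ℝ) ^ (p - 1) := by gcongr
        _ ≤ (p : ℝ) ^ p := pow_le_pow_right₀ (by exact_mod_cast (by omega : 1 ≤ p)) (by omega)
    have h8 : cst p * p * p ≤ 1 := by
      calc cst p * p * p ≤ Real.exp (-32) * Real.exp 16 * Real.exp 16 := by gcongr
        _ = 1 := by rw [← Real.exp_add, ← Real.exp_add]; norm_num
    rw [le_div_iff₀ (by positivity)]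
    calc cst p ^ p * (N : ℝ) ^ (p - 1) * (p.factorial : ℝ)
        ≤ cst p ^ p * (p : ℝ) ^ p * (p : ℝ) ^ p := by gcongr
      _ = (cst p * p * p) ^ p := by rw [mul_pow, mul_pow]
      _ ≤ 1 := pow_le_one₀ (by positivity) h8

theorem exp_half_ge (u : ℝ) (hu : 16 ≤ u) : u ^ 2 + 1 ≤ Real.exp (u / 2) := by
  have h := Real.pow_div_factorial_le_exp (u / 2) (by linarith) 5
  refine le_trans ?_ h
  have : ((Nat.factorial 5 : ℕ) : ℝ) = 120 := by norm_num [Nat.factorial]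
  rw [this]
  have h3 : (4096 : ℝ) ≤ u ^ 3 := by
    calc (4096 : ℝ) = 16 ^ 3 := by norm_num
      _ ≤ u ^ 3 := by gcongr
  have h2 : (256 : ℝ) ≤ u ^ 2 := by nlinarith
  have h5 : (u / 2) ^ 5 / 120 = u ^ 2 * u ^ 3 / 3840 := by ring
  rw [h5]
  nlinarith [mul_le_mul_of_nonneg_left h3 (sq_nonneg u)]

theorem step_case (k p N m : ℕ) (u : ℝ) (hu : u = Real.log p) (hu16 : 16 ≤ u)
    (hN1 : 1 ≤ N) (hNp : N < p) (hm1 : u ^ 2 ≤ m) (hmm : (m : ℝ) * m ≤ p)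
    (h : cst m ^ m * (N : ℝ) ^ (m - 1) ≤ ac k m) :
    cst p ^ p * (N : ℝ) ^ (p - 1) ≤ ac (k + 1) p := by
  have hm256 : (256 : ℝ) ≤ m := by nlinarith
  have hm2 : 2 ≤ m := by
    have : (2 : ℝ) ≤ m := by linarith
    exact_mod_cast this
  have hmpos : (0 : ℝ) < m := by linarith
  have hppos : (0 : ℝ) < p := by exact_mod_cast (by omega : 0 < p)
  have hp1 : (1 : ℝ) ≤ p := by exact_mod_cast (by omega : 1 ≤ p)
  have hN1' : (1 : ℝ) ≤ N := by exact_mod_cast hN1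
  have hNp' : (N : ℝ) ≤ p := by exact_mod_cast hNp.le
  set r := p / m
  set s := p % m
  have hdiv : m * r + s = p := Nat.div_add_mod p m
  have hs : s < m := Nat.mod_lt _ (by omega)
  have hb := ac_blocks k m (by omega) s p r (by rw [hdiv])
  rw [hdiv] at hb
  refine le_trans ?_ hb
  set X := ac k m
  have hX0 : 0 ≤ X := ac_nonneg k m
  have hcm := cst_pos m
  have hcm1 : cst m ≤ 1 := (cst_le m hm2).trans (by
    rw [← Real.exp_zero]; exact Real.exp_le_exp.2 (by norm_num))
  -- Step 1
  have hNX : cst m ^ m * (N : ℝ) ^ m ≤ N * X := by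
    calc cst m ^ m * (N : ℝ) ^ m = N * (cst m ^ m * (N : ℝ) ^ (m - 1)) := by
          obtain ⟨q, hq⟩ : ∃ q, m = q + 1 := ⟨m - 1, by omega⟩
          rw [hq, Nat.add_sub_cancel, pow_succ (N : ℝ)]; ring
      _ ≤ _ := by gcongr
  have h2 : cst m ^ p * (N : ℝ) ^ p ≤ (N : ℝ) ^ (r + s) * X ^ r := by
    calc cst m ^ p * (N : ℝ) ^ p ≤ cst m ^ (m * r) * (N : ℝ) ^ p := by
          apply mul_le_mul_of_nonneg_right _ (by positivity)
          exact pow_le_pow_of_le_one hcm.le hcm1 (by omega)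
      _ = (cst m ^ m * (N : ℝ) ^ m) ^ r * (N : ℝ) ^ s := by
          rw [← hdiv, pow_add, pow_mul, pow_mul, mul_pow]; ring
      _ ≤ (N * X) ^ r * (N : ℝ) ^ s := by gcongr
      _ = _ := by rw [mul_pow, pow_add]; ring
  have h3 : cst m ^ p * (N : ℝ) ^ (p - 1) ≤ (p : ℝ) ^ (r + s) * X ^ r := by
    calc cst m ^ p * (N : ℝ) ^ (p - 1) ≤ cst m ^ p * (N : ℝ) ^ p := by
          apply mul_le_mul_of_nonneg_left _ (by positivity)
          exact pow_le_pow_right₀ hN1' (by omega)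
      _ ≤ _ := h2
      _ ≤ _ := by gcongr
  have h4 : (s.factorial : ℝ) ≤ (p : ℝ) ^ s := by
    calc (s.factorial : ℝ) ≤ (s : ℝ) ^ s := by exact_mod_cast Nat.factorial_le_pow s
      _ ≤ (p : ℝ) ^ s := by
        have : (s : ℝ) ≤ p := by exact_mod_cast Nat.mod_le p m
        gcongr
  have h5 : cst m ^ p * (N : ℝ) ^ (p - 1) / (p : ℝ) ^ (2 * (r + s)) ≤
      (X / p) ^ r / (s.factorial : ℝ) := by
    calc cst m ^ p * (N : ℝ) ^ (p - 1) / (p : ℝ) ^ (2 * (r + s))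
        ≤ (p : ℝ) ^ (r + s) * X ^ r / (p : ℝ) ^ (2 * (r + s)) := by gcongr
      _ = (X / p) ^ r / (p : ℝ) ^ s := by
        rw [div_pow, div_div, ← pow_add, div_eq_div_iff (by positivity) (by positivity),
          two_mul, pow_add _ (r + s) (r + s)]
        ring
      _ ≤ _ := by gcongr
  refine le_trans ?_ h5
  rw [le_div_iff₀ (by positivity)]
  -- Step 2: constants
  have hupos : 0 < u := by linarith
  have hrs : ((r + s : ℕ) : ℝ) * m ≤ 2 * p := by
    have a1 : ((m * r : ℕ) : ℝ) ≤ p := by exact_mod_cast (by omega : m * r ≤ p)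
    have a2 : (s : ℝ) ≤ m := by exact_mod_cast hs.le
    push_cast at a1 ⊢
    nlinarith
  have hpexp : (p : ℝ) = Real.exp u := by rw [hu, Real.exp_log hppos]
  have hcc : cst p * Real.exp (4 / u) ≤ cst m := by
    unfold cst
    rw [← Real.exp_add, ← hu]
    apply Real.exp_le_exp.2
    have hlm : 0 < Real.log m := Real.log_pos (by linarith)
    have hlm2 : Real.log m ≤ u / 2 := by
      have : Real.log ((m : ℝ) * m) ≤ Real.log p := Real.log_le_log (by positivity) hmm
      rw [Real.log_mul hmpos.ne' hmpos.ne', ← hu] at this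
      linarith
    have : 8 / u ≤ 4 / Real.log m := by
      rw [div_le_div_iff₀ hupos hlm]; linarith
    have e : 8 / u = 4 / u + 4 / u := by ring
    linarith
  have hpp : (p : ℝ) ^ (2 * (r + s)) ≤ Real.exp (4 / u) ^ p := by
    rw [← Real.exp_nat_mul]
    nth_rewrite 1 [hpexp]
    rw [← Real.exp_nat_mul]
    apply Real.exp_le_exp.2
    have e : (p : ℝ) * (4 / u) = (4 * p) / u := by ring
    rw [e, le_div_iff₀ hupos]
    push_cast at hrs ⊢
    have a0 : (0 : ℝ) ≤ (r : ℝ) + s := by positivity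
    have a1 : ((r : ℝ) + s) * u ^ 2 ≤ ((r : ℝ) + s) * m := by gcongr
    nlinarith
  have hcp := cst_pos p
  calc cst p ^ p * (N : ℝ) ^ (p - 1) * (p : ℝ) ^ (2 * (r + s))
      ≤ cst p ^ p * (N : ℝ) ^ (p - 1) * Real.exp (4 / u) ^ p := by gcongr
    _ = (cst p * Real.exp (4 / u)) ^ p * (N : ℝ) ^ (p - 1) := by rw [mul_pow]; ring
    _ ≤ _ := by gcongr

theorem ac_lower (j : ℕ) : ∀ k p N : ℕ, 2 ≤ p → 1 ≤ N → (p : ℝ) ≤ 1000 * tw j ^ 3 →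
    j + N ≤ k + 1 → cst p ^ p * (N : ℝ) ^ (p - 1) ≤ ac k p := by
  induction j with
  | zero =>
    intro k p N hp hN hpj hk
    refine base_case k p N hp (by omega) (Or.inr ?_)
    rw [tw_zero] at hpj
    have h1 : Real.exp 16 = Real.exp 2 ^ 8 := by rw [← Real.exp_nat_mul]; norm_num
    have h3 : (3 : ℝ) ≤ Real.exp 2 := by have := Real.add_one_le_exp (2 : ℝ); linarith
    have h4 : (3 : ℝ) ^ 8 ≤ Real.exp 2 ^ 8 := by gcongr
    rw [h1]
    norm_num at h4
    linarith
  | succ j ih =>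
    intro k p N hp hN hpj hk
    by_cases hbase : p ≤ N ∨ (p : ℝ) ≤ Real.exp 16
    · exact base_case k p N hp (by omega) hbase
    · push Not at hbase
      obtain ⟨hNp, hbig⟩ := hbase
      have hppos : (0 : ℝ) < p := by exact_mod_cast (by omega : 0 < p)
      obtain ⟨k', rfl⟩ : ∃ k', k = k' + 1 := ⟨k - 1, by omega⟩
      set u := Real.log p with hu
      have hu16 : 16 ≤ u := (Real.le_log_iff_exp_le hppos).2 hbig.le
      have hpexp : (p : ℝ) = Real.exp u := by rw [hu, Real.exp_log hppos]
      set m := ⌈u ^ 2⌉₊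
      have hm1 : u ^ 2 ≤ m := Nat.le_ceil _
      have hm2 : (m : ℝ) ≤ u ^ 2 + 1 := (Nat.ceil_lt_add_one (sq_nonneg u)).le
      have hexp := exp_half_ge u hu16
      have hmm : (m : ℝ) * m ≤ p := by
        have e : (p : ℝ) = Real.exp (u / 2) * Real.exp (u / 2) := by
          rw [← Real.exp_add, hpexp]; ring_nf
        rw [e]
        have := hm2.trans hexp
        gcongr
      have hm3 : 2 ≤ m := by
        have : (2 : ℝ) ≤ m := by nlinarith
        exact_mod_cast this
      refine step_case k' p N m u hu hu16 hN hNp hm1 hmm (ih k' m N hm3 hN ?_ (by omega))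
      have ht := one_le_tw j
      have hle : u ≤ 7 + 3 * tw j := by
        have h1 : u ≤ Real.log (1000 * tw (j + 1) ^ 3) := Real.log_le_log hppos hpj
        rw [tw_succ, Real.log_mul (by norm_num) (by positivity), Real.log_pow, Real.log_exp] at h1
        have h2 : Real.log 1000 ≤ 7 := by
          have h3 : Real.log 1000 ≤ Real.log (2 ^ 10) := Real.log_le_log (by norm_num) (by norm_num)
          rw [Real.log_pow] at h3
          have := Real.log_two_lt_d9
          push_cast at h3
          linarith
        push_cast at h1
        linarith
      have hle2 : u ≤ 10 * tw j := by linarith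
      have h5 : u ^ 2 ≤ 100 * tw j ^ 2 := by nlinarith
      have h6 : tw j ^ 2 ≤ tw j ^ 3 := pow_le_pow_right₀ ht (by norm_num)
      have h7 : 1 ≤ tw j ^ 2 := one_le_pow₀ ht
      linarith

theorem hb_lower (p : ℕ) (hp : 2 ≤ p) (N : ℕ) (hN : 1 ≤ N) :
    (Real.exp (-39) * p) ^ p * (N : ℝ) ^ (p - 1) ≤ (hb (logStar p - 1 + N) p : ℝ) := by
  obtain ⟨hl, htw, _⟩ := logStar_spec p hp
  set l := logStar (p : ℝ)
  have ht := one_le_tw l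
  have h1 : (p : ℝ) ≤ 1000 * tw l ^ 3 := by
    have : tw l ≤ tw l ^ 3 := le_self_pow₀ ht (by norm_num)
    have : 1 ≤ tw l ^ 3 := one_le_pow₀ ht
    linarith
  have h2 := ac_lower l (l - 1 + N) p N hp hN h1 (by omega)
  unfold ac at h2
  rw [le_div_iff₀ (by positivity)] at h2
  refine le_trans ?_ h2
  have h3 := cst_ge p
  have hc := cst_pos p
  have h4 := factorial_ge p
  have e : Real.exp (-39) * p = Real.exp (-38) * (p / Real.exp 1) := by
    have : Real.exp (-39) = Real.exp (-38) / Real.exp 1 := by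
      rw [← Real.exp_sub]; norm_num
    rw [this]; ring
  rw [e, mul_pow]
  calc Real.exp (-38) ^ p * (p / Real.exp 1) ^ p * (N : ℝ) ^ (p - 1)
      ≤ cst p ^ p * (p.factorial : ℝ) * (N : ℝ) ^ (p - 1) := by gcongr
    _ = _ := by ring

end BellAux

/-- There are absolute constants `0 < c ≤ C` such that for every
integer `p ≥ 2` and every integer `k > k₀ := log* p − 1`,
`c · p · (k − k₀)^{1−1/p} ≤ bell_k(p)^{1/p} ≤ C · p · (k − k₀)^{1−1/p}`. -/
theorem bellk_asymptotics_large_k :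
    ∃ c C : ℝ, 0 < c ∧ c ≤ C ∧
      ∀ p : ℕ, 2 ≤ p → ∀ k : ℕ, logStar p - 1 < k →
        c * p * ((k - (logStar p - 1) : ℕ) : ℝ) ^ (1 - 1 / (p : ℝ)) ≤
          (bellk k p : ℝ) ^ (1 / (p : ℝ)) ∧
        (bellk k p : ℝ) ^ (1 / (p : ℝ)) ≤
          C * p * ((k - (logStar p - 1) : ℕ) : ℝ) ^ (1 - 1 / (p : ℝ)) := by
  refine ⟨Real.exp (-39), 2 * Real.exp 1, Real.exp_pos _, ?_, ?_⟩
  · have h1 : Real.exp (-39) ≤ Real.exp 1 := Real.exp_le_exp.2 (by norm_num)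
    have h2 := Real.exp_pos 1
    linarith
  intro p hp k hk
  obtain ⟨N, hN⟩ : ∃ N, N = k - (logStar p - 1) := ⟨_, rfl⟩
  have hN1 : 1 ≤ N := by omega
  have hkN : k = logStar p - 1 + N := by omega
  rw [← hN, BellAux.bellk_eq, hkN]
  have hlo := BellAux.hb_lower p hp N hN1
  have hup := BellAux.hb_upper p hp N hN1
  set b : ℝ := (BellAux.hb (logStar p - 1 + N) p : ℝ)
  have hb0 : 0 ≤ b := Nat.cast_nonneg _
  have hp0 : p ≠ 0 := by omega
  have hppos : (0 : ℝ) < p := by exact_mod_cast (by omega : 0 < p)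
  have hNpow : ((N : ℝ) ^ (1 - 1 / (p : ℝ))) ^ p = (N : ℝ) ^ (p - 1) := by
    rw [← Real.rpow_natCast, ← Real.rpow_mul (by positivity), ← Real.rpow_natCast,
      Nat.cast_sub (by omega)]
    congr 1
    push_cast
    field_simp
  have hbp : (b ^ (1 / (p : ℝ))) ^ p = b := by
    rw [one_div]; exact Real.rpow_inv_natCast_pow hb0 hp0
  constructor
  · refine le_of_pow_le_pow_left₀ hp0 (by positivity) ?_
    rw [hbp, mul_pow, hNpow]
    exact hlo
  · refine le_of_pow_le_pow_left₀ hp0 (by positivity) ?_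
    rw [hbp, mul_pow, hNpow]
    exact hup
end
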